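/- (Theorem 6, destructive control with multiple candidates) Let k ∈ ℕ and suppose S ⊆ V with |S| ≤ k satisfies Σ_{y ⊆ E} w(y)·f(S, y, A') ≥ (1 − 1/e) · Σ_{y ⊆ E} w(y)·f(S', y, A') for every S' ⊆ V with |S'| ≤ k (as the greedy algorithm MOVDestructive guarantees for the expected number of influenced voters in A'). Then MOV_D(S) ≥ (1/2)·(1 − 1/e) · MOV_D(S') for every S' ⊆ V with |S'| ≤ k. -/

import Mathlib

/-!
In every scenario the margin term `max_{c ∈ J} (f(S, y, A' ∩ C_c) + |B_c| - max_{c'} |B_{c'}|)` lies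
between `0` and `f(S, y, A')`: a candidate maximizing `|B_c|` contributes a nonnegative amount
(`le_mD`), while `A' ∩ C_c ⊆ A'` and `|B_c| ≤ max_{c'} |B_{c'}|` give the upper bound
(`mD_le_two_mul`). Hence `f(S, y, A') ≤ m_D(S, y) ≤ 2 f(S, y, A')`, and the approximation guarantee
for the expectation of `f(·, y, A')` passes to `MOV_D` at the cost of a factor `2`.
-/

open Finset

attribute [local instance] Classical.propDecidable

/-- Number of nodes of `A` reachable from seed set `S` in scenario `y`. -/
noncomputable def reachCount {V : Type*} (y : Finset (V × V)) (S A : Finset V) : ℕ :=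
  (A.filter (fun v => ∃ s ∈ S, Relation.ReflTransGen (fun a b => (a, b) ∈ y) s v)).card

/-- Probability of the live-graph scenario `y ⊆ E` under edge probabilities `p`. -/
noncomputable def sceneWeight {V : Type*} (E : Finset (V × V)) (p : V × V → ℝ)
    (y : Finset (V × V)) : ℝ :=
  (∏ e ∈ y, p e) * (∏ e ∈ E \ y, (1 - p e))

/-- Voters whose second choice is `c`. -/
noncomputable def secondFor {V C : Type*} [Fintype V] (π₂ : V → C) (c : C) : Finset V :=
  Finset.univ.filter (fun v => π₂ v = c)

/-- Voters whose first choice is `c`. -/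
noncomputable def firstFor {V C : Type*} [Fintype V] (π₁ : V → C) (c : C) : Finset V :=
  Finset.univ.filter (fun v => π₁ v = c)

/-- Destructive change in margin in scenario `y` under seed set `S`:
`m_D(S, y) = f(S, y, A') + max_{c ∈ J} ( f(S, y, A' ∩ C_c) + |B_c| − max_{c' ∈ J} |B_{c'}| )`,
where `A' = {v : π₁ v = c*}`, `B_c = {v : π₁ v = c}` and `C_c = {v : π₂ v = c}`. -/
noncomputable def mD {V C : Type*} [Fintype V] (J : Finset C) (hJ : J.Nonempty)
    (π₁ π₂ : V → C) (cstar : C) (S : Finset V) (y : Finset (V × V)) : ℝ :=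
  (reachCount y S (firstFor π₁ cstar) : ℝ) +
    J.sup' hJ (fun c =>
      (reachCount y S (firstFor π₁ cstar ∩ secondFor π₂ c) : ℝ) +
        ((firstFor π₁ c).card : ℝ) - J.sup' hJ (fun c' => ((firstFor π₁ c').card : ℝ)))

/-- Expected destructive change in margin `MOV_D(S) = Σ_{y ⊆ E} w(y)·m_D(S, y)`. -/
noncomputable def MOVD {V C : Type*} [Fintype V] (E : Finset (V × V)) (p : V × V → ℝ)
    (J : Finset C) (hJ : J.Nonempty) (π₁ π₂ : V → C) (cstar : C) (S : Finset V) : ℝ :=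
  ∑ y ∈ E.powerset, sceneWeight E p y * mD J hJ π₁ π₂ cstar S y

theorem sceneWeight_nonneg {V : Type*} (E : Finset (V × V)) (p : V × V → ℝ)
    (hp : ∀ e ∈ E, 0 ≤ p e ∧ p e ≤ 1) {y : Finset (V × V)} (hy : y ∈ E.powerset) :
    0 ≤ sceneWeight E p y := by
  rw [Finset.mem_powerset] at hy
  refine mul_nonneg (Finset.prod_nonneg fun e he => (hp e (hy he)).1)
    (Finset.prod_nonneg fun e he => ?_)
  exact sub_nonneg.mpr (hp e (Finset.mem_sdiff.mp he).1).2

theorem reachCount_mono {V : Type*} (y : Finset (V × V)) (S : Finset V) {A B : Finset V}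
    (h : A ⊆ B) : reachCount y S A ≤ reachCount y S B :=
  Finset.card_le_card (Finset.filter_subset_filter _ h)

theorem le_mD {V C : Type*} [Fintype V] (J : Finset C) (hJ : J.Nonempty)
    (π₁ π₂ : V → C) (cstar : C) (S : Finset V) (y : Finset (V × V)) :
    (reachCount y S (firstFor π₁ cstar) : ℝ) ≤ mD J hJ π₁ π₂ cstar S y := by
  unfold mD
  obtain ⟨c, hc, hmax⟩ := Finset.exists_mem_eq_sup' hJ
    (fun c' => ((firstFor π₁ c').card : ℝ))
  refine le_add_of_nonneg_right ((?_ : (0 : ℝ) ≤ _).trans (Finset.le_sup' _ hc))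
  rw [hmax, add_sub_cancel_right]
  exact Nat.cast_nonneg _

theorem mD_le_two_mul {V C : Type*} [Fintype V] (J : Finset C) (hJ : J.Nonempty)
    (π₁ π₂ : V → C) (cstar : C) (S : Finset V) (y : Finset (V × V)) :
    mD J hJ π₁ π₂ cstar S y ≤ 2 * (reachCount y S (firstFor π₁ cstar) : ℝ) := by
  unfold mD
  rw [two_mul]
  refine add_le_add_right (Finset.sup'_le _ _ fun c hc => ?_) _
  have h₁ : (reachCount y S (firstFor π₁ cstar ∩ secondFor π₂ c) : ℝ) ≤
      reachCount y S (firstFor π₁ cstar) :=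
    Nat.cast_le.mpr (reachCount_mono y S Finset.inter_subset_left)
  have h₂ := Finset.le_sup' (fun c' => ((firstFor π₁ c').card : ℝ)) hc
  linarith

/-- Theorem 6, destructive control with multiple candidates: if `S`
(of size at most `k`) is a `(1 − 1/e)`-approximate maximizer of the expected number of
influenced voters in `A' = {v : π₁ v = c*}` among sets of size at most `k`, then
`MOV_D(S) ≥ (1/2)·(1 − 1/e)·MOV_D(S')` for every `S'` of size at most `k`. -/
theorem movD_multicandidate {V C : Type*} [Fintype V]
    (E : Finset (V × V)) (p : V × V → ℝ) (hp : ∀ e ∈ E, 0 ≤ p e ∧ p e ≤ 1)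
    (J : Finset C) (hJ : J.Nonempty) (π₁ π₂ : V → C) (cstar : C)
    (hdist : ∀ v, π₁ v ≠ π₂ v) (k : ℕ)
    (S : Finset V) (hS : S.card ≤ k)
    (hgreedy : ∀ S' : Finset V, S'.card ≤ k →
      (1 - 1 / Real.exp 1) *
          ∑ y ∈ E.powerset, sceneWeight E p y * (reachCount y S' (firstFor π₁ cstar) : ℝ) ≤
        ∑ y ∈ E.powerset, sceneWeight E p y * (reachCount y S (firstFor π₁ cstar) : ℝ)) :
    ∀ S' : Finset V, S'.card ≤ k →
      (1 / 2) * (1 - 1 / Real.exp 1) * MOVD E p J hJ π₁ π₂ cstar S' ≤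
        MOVD E p J hJ π₁ π₂ cstar S := by
  intro S' hS'
  have hlow : ∑ y ∈ E.powerset, sceneWeight E p y * (reachCount y S (firstFor π₁ cstar) : ℝ) ≤
      MOVD E p J hJ π₁ π₂ cstar S :=
    Finset.sum_le_sum fun y hy =>
      mul_le_mul_of_nonneg_left (le_mD J hJ π₁ π₂ cstar S y) (sceneWeight_nonneg E p hp hy)
  have hupp : MOVD E p J hJ π₁ π₂ cstar S' ≤
      2 * ∑ y ∈ E.powerset, sceneWeight E p y * (reachCount y S' (firstFor π₁ cstar) : ℝ) := by
    rw [Finset.mul_sum]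
    refine Finset.sum_le_sum fun y hy => ?_
    rw [mul_left_comm]
    exact mul_le_mul_of_nonneg_left (mD_le_two_mul J hJ π₁ π₂ cstar S' y)
      (sceneWeight_nonneg E p hp hy)
  have hexp : 0 ≤ 1 - 1 / Real.exp 1 := by
    rw [sub_nonneg, div_le_one (Real.exp_pos 1)]
    exact Real.one_le_exp zero_le_one
  have hmul := mul_le_mul_of_nonneg_left hupp hexp
  linarith [hgreedy S' hS']
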